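/- There exists a sequence (q_j)_{j≥1}, where each q_j is a cofinite ultrafilter on FIN_j, such that M_j ∈ q_j for every j ≥ 1 and f(q_j) = q_i for all i, j ≥ 1 and every nondecreasing surjection f : {0,…,j} → {0,…,i}. (In particular, the set Σ₁ of sequences of cofinite ultrafilters coherent under all generalized tetris operations is nonempty.) -/

import Mathlib

/-!
A tetris function `f : {0,…,j} → {0,…,i}` fixes the endpoints, that is, `f 0 = 0` and `f j = i`,
so on the multiples `j • b` of `b ∈ FIN 1` it acts as the rescaling `j • b ↦ i • b`. Hence *every*
cofinite ultrafilter `p` on `FIN 1` starts a coherent sequence, namely its images under `b ↦ j • b`.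
One such `p` is the image of a nonprincipal ultrafilter on `ℕ` under `n ↦ Pi.single n 1`.
-/

open Filter

/-- `FIN k`: finitely supported functions `ℕ → {0,…,k}` attaining the maximum value `k`. -/
def FIN (k : ℕ) : Set (ℕ → ℕ) :=
  {b | (∀ n, b n ≤ k) ∧ {n | b n ≠ 0}.Finite ∧ ∃ n, b n = k}

/-- `f` is (the extension to `ℕ` of) a nondecreasing surjection `{0,…,j} → {0,…,i}`. -/
def IsTetrisFn (j i : ℕ) (f : ℕ → ℕ) : Prop :=
  (∀ l l', l' ≤ l → l ≤ j → f l' ≤ f l) ∧ (∀ l, l ≤ j → f l ≤ i) ∧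
    ∀ m, m ≤ i → ∃ l, l ≤ j ∧ f l = m

/-- An ultrafilter is cofinite if for every `n` the set of `b` with `b n = 0` belongs
to it. -/
def IsCofinite (U : Ultrafilter (ℕ → ℕ)) : Prop := ∀ n, {b : ℕ → ℕ | b n = 0} ∈ U

/-- The generalized tetris operation `b ↦ f ∘ b`. -/
def tetrisMap (f : ℕ → ℕ) : (ℕ → ℕ) → ℕ → ℕ := fun b => f ∘ b

/-- `M j`: the elements of `FIN j` taking only the values `0` and `j`. -/
def Mset (j : ℕ) : Set (ℕ → ℕ) := {b | b ∈ FIN j ∧ ∀ n, b n = 0 ∨ b n = j}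

namespace IsTetrisFn

variable {i j : ℕ} {f : ℕ → ℕ}

theorem map_zero (hf : IsTetrisFn j i f) : f 0 = 0 := by
  obtain ⟨hmono, -, hsurj⟩ := hf
  obtain ⟨l, hl, hfl⟩ := hsurj 0 i.zero_le
  exact Nat.le_zero.mp (hfl ▸ hmono l 0 l.zero_le hl)

theorem map_top (hf : IsTetrisFn j i f) : f j = i := by
  obtain ⟨hmono, hle, hsurj⟩ := hf
  obtain ⟨l, hl, hfl⟩ := hsurj i le_rfl
  exact (hle j le_rfl).antisymm (hfl ▸ hmono j l hl le_rfl)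

theorem tetrisMap_smul (hf : IsTetrisFn j i f) {b : ℕ → ℕ} (hb : ∀ n, b n ≤ 1) :
    tetrisMap f (j • b) = i • b := by
  funext n
  rcases Nat.le_one_iff_eq_zero_or_eq_one.mp (hb n) with h | h <;>
    simp [tetrisMap, h, hf.map_zero, hf.map_top]

theorem map_tetrisMap_map_smul (hf : IsTetrisFn j i f) {p : Ultrafilter (ℕ → ℕ)}
    (hp : ∀ᶠ b : ℕ → ℕ in p, ∀ n, b n ≤ 1) :
    (p.map (j • ·)).map (tetrisMap f) = p.map (i • ·) := by
  rw [Ultrafilter.map_map]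
  exact Ultrafilter.coe_injective (map_congr (hp.mono fun _ hb => hf.tetrisMap_smul hb))

end IsTetrisFn

theorem smul_mem_Mset (j : ℕ) {b : ℕ → ℕ} (hb : b ∈ FIN 1) : j • b ∈ Mset j := by
  obtain ⟨hle, hfin, n, hn⟩ := hb
  refine ⟨⟨fun m => ?_, hfin.subset fun m => right_ne_zero_of_mul, n, by simp [hn]⟩, fun m => ?_⟩
  · simpa using Nat.mul_le_mul_left j (hle m)
  · rcases Nat.le_one_iff_eq_zero_or_eq_one.mp (hle m) with h | h <;> simp [h]

theorem IsCofinite.map_smul {p : Ultrafilter (ℕ → ℕ)} (hp : IsCofinite p) (j : ℕ) :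
    IsCofinite (p.map (j • ·)) := by
  intro n
  rw [Ultrafilter.mem_map]
  filter_upwards [hp n] with b (hb : b n = 0)
  simp [hb]

theorem single_mem_FIN (n k : ℕ) : Pi.single n k ∈ FIN k := by
  refine ⟨fun m => ?_, (Set.finite_singleton n).subset Pi.support_single_subset, n, by simp⟩
  rw [Pi.single_apply]
  split_ifs <;> simp

theorem exists_FIN_mem_and_isCofinite (k : ℕ) :
    ∃ p : Ultrafilter (ℕ → ℕ), FIN k ∈ p ∧ IsCofinite p := by
  refine ⟨(hyperfilter ℕ).map (Pi.single · k), ?_, fun m => ?_⟩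
  · exact Ultrafilter.mem_map.mpr (univ_mem' fun n => single_mem_FIN n k)
  · have hne : ∀ᶠ n in hyperfilter ℕ, n ≠ m :=
      compl_mem_hyperfilter_of_finite (Set.finite_singleton m)
    rw [Ultrafilter.mem_map]
    filter_upwards [hne] with n hn
    simp [hn.symm]

/-- There is a sequence `(q_j)` of cofinite ultrafilters on `FIN j` with `M_j ∈ q_j` for
every `j ≥ 1`, coherent under all generalized tetris operations: `f(q_j) = q_i` for all
`i, j ≥ 1` and nondecreasing surjections `f : {0,…,j} → {0,…,i}`. -/
theorem sigma_one_nonempty :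
    ∃ q : ℕ → Ultrafilter (ℕ → ℕ),
      ∀ j, 1 ≤ j →
        (FIN j ∈ q j ∧ IsCofinite (q j)) ∧ Mset j ∈ q j ∧
        ∀ i, 1 ≤ i → ∀ f : ℕ → ℕ, IsTetrisFn j i f → (q j).map (tetrisMap f) = q i := by
  obtain ⟨p, hFIN, hcof⟩ := exists_FIN_mem_and_isCofinite 1
  refine ⟨fun j => p.map (j • ·), fun j _ => ?_⟩
  have hM : Mset j ∈ p.map (j • ·) :=
    Ultrafilter.mem_map.mpr (mem_of_superset hFIN fun _ => smul_mem_Mset j)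
  have hle : ∀ᶠ b : ℕ → ℕ in p, ∀ n, b n ≤ 1 := mem_of_superset hFIN fun _ hb => hb.1
  exact ⟨⟨mem_of_superset hM fun _ hb => hb.1, hcof.map_smul j⟩, hM,
    fun _ _ _ hf => hf.map_tetrisMap_map_smul hle⟩
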